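/- Theorem 1(iii), o(1/k) best-iterate rate of the PD3O algorithm for smooth H: Suppose the stepsizes are constant, γ_k ≡ γ ∈ (0, 2/L_F), η ≥ ‖K‖², and in addition H is differentiable with L-Lipschitz gradient for some L > 0. Then min_{i=1,…,k} Ψ(x^i) − Ψ(x*) = o(1/k); that is, k · (min_{i=1,…,k} Ψ(x^i) − Ψ(x*)) → 0 as k → ∞. -/

import Mathlib

open Filter Topology RealInnerProductSpace

noncomputable section

/-- `p` is a minimizer of `y ↦ σ·G(y) + (1/2)‖y − z‖²`, i.e. `p = prox_{σG}(z)`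
(the minimizer is unique when `G` is convex). -/
def IsProxPt {E : Type*} [NormedAddCommGroup E] [InnerProductSpace ℝ E]
    (σ : ℝ) (G : E → ℝ) (z p : E) : Prop :=
  ∀ y, σ * G p + ‖p - z‖ ^ 2 / 2 ≤ σ * G y + ‖y - z‖ ^ 2 / 2

/-- `u ∈ ∂G(z)`. -/
def IsSubgradientAt {E : Type*} [NormedAddCommGroup E] [InnerProductSpace ℝ E]
    (G : E → ℝ) (z u : E) : Prop :=
  ∀ y, G z + ⟪u, y - z⟫ ≤ G y

/-!
The operators `∂R`, `∇F` and `∂H` are monotone. Let `Γₖ ≥ 0` be the sum of their monotonicity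
products between the `k`-th step and a primal-dual solution, and put
`dₖ = qᵏ - qᵏ⁺¹ - K†(uᵏ - uᵏ⁺¹)`. The quadratic form `‖q‖² - 2⟪Kq, u⟫ + η‖u‖²`, evaluated at the
difference of `(qᵏ, uᵏ)` and its limit value, is nonnegative because `‖K‖² ≤ η`. By cocoercivity
of `∇F` and `γ L_F < 2` it decreases in each step by at least a multiple of `Γₖ + ‖dₖ‖²`, which is
therefore summable.

The dual variable `uᵏ⁺¹` is the gradient of `H` at a proximal point `pᵏ`. Cocoercivity of `∇H` gives
`‖uᵏ⁺¹ - u*‖² ≤ L Γₖ`, so the dual errors are square summable, and so are the residuals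
`K xᵏ⁺¹ - pᵏ`, which are linear in `uᵏ - uᵏ⁺¹` and `dₖ`. The objective gap of `xᵏ⁺¹` is at most
`Γₖ + ⟪uᵏ⁺¹ - u*, K xᵏ⁺¹ - pᵏ⟫ + (L / 2) ‖K xᵏ⁺¹ - pᵏ‖²`, hence summable. Its running minimum is
antitone and summable, hence `o(1/k)`.
-/

section Subgradient

variable {E : Type*} [NormedAddCommGroup E] [InnerProductSpace ℝ E] {G : E → ℝ}

theorem IsSubgradientAt.inner_sub_nonneg {x y u v : E} (hu : IsSubgradientAt G x u)
    (hv : IsSubgradientAt G y v) : 0 ≤ ⟪u - v, x - y⟫ := by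
  have hxy := hu y
  have hyx := hv x
  rw [← neg_sub x y, inner_neg_right] at hxy
  rw [inner_sub_left]
  linarith

theorem IsProxPt.isSubgradientAt {σ : ℝ} {z p : E} (h : IsProxPt σ G z p)
    (hG : ConvexOn ℝ Set.univ G) (hσ : 0 < σ) : IsSubgradientAt G p (σ⁻¹ • (z - p)) := by
  intro y
  have hsegment : ∀ s ∈ Set.Ioo (0 : ℝ) 1,
      ⟪z - p, y - p⟫ ≤ σ * (G y - G p) + s * (‖y - p‖ ^ 2 / 2) := by
    rintro s ⟨hs₀, hs₁⟩
    have hconv : G (p + s • (y - p)) ≤ (1 - s) * G p + s * G y := by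
      have := hG.2 (Set.mem_univ p) (Set.mem_univ y) (sub_nonneg.2 hs₁.le) hs₀.le (by ring)
      rwa [show (1 - s) • p + s • y = p + s • (y - p) by module] at this
    have hprox := h (p + s • (y - p))
    rw [show p + s • (y - p) - z = s • (y - p) - (z - p) by abel, norm_sub_sq_real (s • _),
      real_inner_smul_left, real_inner_comm, norm_smul, Real.norm_of_nonneg hs₀.le, mul_pow,
      norm_sub_rev p z] at hprox
    have hconv' := mul_le_mul_of_nonneg_left hconv hσ.le
    refine le_of_mul_le_mul_left ?_ hs₀
    linarith
  have hlim : Tendsto (fun s : ℝ => σ * (G y - G p) + s * (‖y - p‖ ^ 2 / 2)) (𝓝[>] 0)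
      (𝓝 (σ * (G y - G p))) := by
    refine tendsto_nhdsWithin_of_tendsto_nhds (Continuous.tendsto' (by fun_prop) _ _ ?_)
    ring
  have hinner : ⟪z - p, y - p⟫ ≤ σ * (G y - G p) :=
    ge_of_tendsto hlim (eventually_of_mem (Ioo_mem_nhdsGT one_pos) hsegment)
  have := (inv_mul_le_iff₀ hσ).2 hinner
  rw [real_inner_smul_left]
  linarith

variable [CompleteSpace E]

theorem IsSubgradientAt.eq_of_hasGradientAt {z u g : E} (hu : IsSubgradientAt G z u)
    (hg : HasGradientAt G g z) : u = g := by
  have hmin : IsLocalMin (fun y => G y - ⟪u, y⟫) z := by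
    refine Eventually.of_forall fun y => ?_
    have := hu y
    rw [inner_sub_right] at this
    linarith
  have hzero := hmin.hasFDerivAt_eq_zero (hg.hasFDerivAt.sub (innerSL ℝ u).hasFDerivAt)
  refine ext_inner_right ℝ fun v => ?_
  have := congr($hzero v)
  simp only [sub_apply, InnerProductSpace.toDual_apply_apply, innerSL_apply_apply,
    zero_apply] at this
  linarith

theorem IsSubgradientAt.of_hasGradientAt {z g : E} (hG : ConvexOn ℝ Set.univ G)
    (hg : HasGradientAt G g z) : IsSubgradientAt G z g := by
  intro y
  have hderiv : HasDerivAt (G ∘ AffineMap.lineMap z y) ⟪g, y - z⟫ (0 : ℝ) := by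
    rw [← AffineMap.lineMap_apply_zero (k := ℝ) z y] at hg
    exact hg.hasFDerivAt.comp_hasDerivAt 0 AffineMap.hasDerivAt_lineMap
  have hslope := (hG.comp_affineMap (AffineMap.lineMap z y)).le_slope_of_hasDerivAt
    (Set.mem_univ 0) (Set.mem_univ 1) one_pos hderiv
  simp only [slope_def_field, Function.comp_apply, AffineMap.lineMap_apply_zero,
    AffineMap.lineMap_apply_one, sub_zero, div_one] at hslope
  linarith

end Subgradient

section SmoothConvex

variable {E : Type*} [NormedAddCommGroup E] [InnerProductSpace ℝ E]
  {G : E → ℝ} {G' : E → E} {L : ℝ}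

theorem mul_inner_le_of_sq_norm_le {d g : E} {γ L S : ℝ} (hγ : 0 < γ) (hL : 0 < L)
    (hg : ‖g‖ ^ 2 ≤ L * S) :
    γ * ⟪d, g⟫ ≤ (2 + γ * L) / 4 * (S + γ / 2 * ‖d‖ ^ 2) := by
  set s := (2 + γ * L) / 4 with hs
  have hs₀ : 0 < s := by positivity
  have hS : 0 ≤ S := nonneg_of_mul_nonneg_right ((sq_nonneg _).trans hg) hL
  -- AM-GM: `s` is the arithmetic mean of `1` and `γ * L / 2`.
  have hamgm : γ / 2 * L ≤ s * s := by
    rw [hs]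
    linarith [sq_nonneg (2 - γ * L)]
  have hcoef : γ / 2 * (s⁻¹ * (L * S)) ≤ s * S := by
    have := mul_le_mul_of_nonneg_right ((inv_mul_le_iff₀ hs₀).2 hamgm) hS
    linarith
  calc γ * ⟪d, g⟫ ≤ γ * (‖d‖ * ‖g‖) := by gcongr; exact real_inner_le_norm d g
    _ = γ / 2 * (2 * ‖d‖ * ‖g‖) := by ring
    _ ≤ γ / 2 * (s * ‖d‖ ^ 2 + s⁻¹ * ‖g‖ ^ 2) := by gcongr; exact two_mul_le_add_mul_sq hs₀
    _ ≤ γ / 2 * (s * ‖d‖ ^ 2 + s⁻¹ * (L * S)) := by gcongr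
    _ ≤ s * (S + γ / 2 * ‖d‖ ^ 2) := by linarith

variable [CompleteSpace E]

theorem le_add_inner_add_sq_of_lipschitz_gradient (hG : ∀ z, HasGradientAt G (G' z) z)
    (hlip : ∀ z z', ‖G' z - G' z'‖ ≤ L * ‖z - z'‖) (x y : E) :
    G y ≤ G x + ⟪G' x, y - x⟫ + L / 2 * ‖y - x‖ ^ 2 := by
  set ℓ : ℝ → E := ⇑(AffineMap.lineMap (k := ℝ) x y) with hℓ
  have hderiv (t : ℝ) : HasDerivAt (G ∘ ℓ) ⟪G' (ℓ t), y - x⟫ t :=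
    (hG (ℓ t)).hasFDerivAt.comp_hasDerivAt t AffineMap.hasDerivAt_lineMap
  have hderiv' (t : ℝ) :
      HasDerivAt (fun t => G x + t * ⟪G' x, y - x⟫ + L / 2 * ‖y - x‖ ^ 2 * t ^ 2)
        (⟪G' x, y - x⟫ + t * (L * ‖y - x‖ ^ 2)) t := by
    refine ((((hasDerivAt_id t).mul_const ⟪G' x, y - x⟫).const_add (G x)).add
      (((hasDerivAt_id t).pow 2).const_mul (L / 2 * ‖y - x‖ ^ 2))).congr_deriv ?_
    simp only [id_eq]
    ring
  have hbound : ∀ t ∈ Set.Ico (0 : ℝ) 1,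
      ⟪G' (ℓ t), y - x⟫ ≤ ⟪G' x, y - x⟫ + t * (L * ‖y - x‖ ^ 2) := by
    rintro t ⟨ht, -⟩
    rw [← sub_le_iff_le_add', ← inner_sub_left]
    calc ⟪G' (ℓ t) - G' x, y - x⟫ ≤ ‖G' (ℓ t) - G' x‖ * ‖y - x‖ := real_inner_le_norm _ _
      _ ≤ L * ‖ℓ t - x‖ * ‖y - x‖ := by gcongr; exact hlip _ _
      _ = t * (L * ‖y - x‖ ^ 2) := by
        rw [hℓ, AffineMap.lineMap_apply_module', add_sub_cancel_right, norm_smul,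
          Real.norm_of_nonneg ht]
        ring
  have := image_le_of_deriv_right_le_deriv_boundary
    (fun t _ => (hderiv t).continuousAt.continuousWithinAt)
    (fun t _ => (hderiv t).hasDerivWithinAt) (by simp [hℓ])
    (fun t _ => (hderiv' t).continuousAt.continuousWithinAt)
    (fun t _ => (hderiv' t).hasDerivWithinAt) hbound (Set.right_mem_Icc.2 zero_le_one)
  simpa [hℓ] using this

/-- `G` is convex and `L`-smooth with gradient field `G'`. The gradient is carried as data so that
the algorithm can refer to it. -/
structure IsSmoothConvex (G : E → ℝ) (G' : E → E) (L : ℝ) : Prop where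
  convexOn : ConvexOn ℝ Set.univ G
  hasGradientAt : ∀ z, HasGradientAt G (G' z) z
  norm_sub_le : ∀ z z', ‖G' z - G' z'‖ ≤ L * ‖z - z'‖

namespace IsSmoothConvex

theorem isSubgradientAt (h : IsSmoothConvex G G' L) (z : E) : IsSubgradientAt G z (G' z) :=
  .of_hasGradientAt h.convexOn (h.hasGradientAt z)

theorem le_add_inner_add_sq (h : IsSmoothConvex G G' L) (x y z : E) :
    G y ≤ G x + ⟪G' z, y - x⟫ + L / 2 * ‖y - z‖ ^ 2 := by
  have hconv := h.isSubgradientAt z x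
  have hdescent := le_add_inner_add_sq_of_lipschitz_gradient h.hasGradientAt h.norm_sub_le z y
  rw [← sub_sub_sub_cancel_right y x z, inner_sub_right]
  linarith

theorem add_inner_add_sq_le (h : IsSmoothConvex G G' L) (hL : 0 < L) (x y : E) :
    G x + ⟪G' x, y - x⟫ + (2 * L)⁻¹ * ‖G' y - G' x‖ ^ 2 ≤ G y := by
  -- Compare `G x` and `G y` through one gradient step from `y` for `G - ⟪G' x, ·⟫`.
  set g := G' y - G' x with hg
  have hlower := h.isSubgradientAt x (y - L⁻¹ • g)
  have hupper := h.le_add_inner_add_sq y (y - L⁻¹ • g) y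
  have hstep : L / 2 * ‖L⁻¹ • g‖ ^ 2 = (2 * L)⁻¹ * ‖g‖ ^ 2 := by
    rw [norm_smul, Real.norm_of_nonneg (inv_nonneg.2 hL.le)]
    field_simp
  have hinner : ⟪G' y, L⁻¹ • g⟫ - ⟪G' x, L⁻¹ • g⟫ = 2 * ((2 * L)⁻¹ * ‖g‖ ^ 2) := by
    rw [← inner_sub_left, ← hg, real_inner_smul_right, real_inner_self_eq_norm_sq]
    field_simp
  rw [sub_right_comm, inner_sub_right] at hlower
  rw [sub_sub_cancel_left, inner_neg_right, norm_neg, hstep] at hupper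
  linarith

theorem sq_norm_sub_le (h : IsSmoothConvex G G' L) (hL : 0 < L) (x y : E) :
    ‖G' x - G' y‖ ^ 2 ≤ L * ⟪G' x - G' y, x - y⟫ := by
  have hxy := h.add_inner_add_sq_le hL x y
  have hyx := h.add_inner_add_sq_le hL y x
  rw [norm_sub_rev, ← neg_sub x y, inner_neg_right] at hxy
  have hsum : L⁻¹ * ‖G' x - G' y‖ ^ 2 ≤ ⟪G' x - G' y, x - y⟫ := by
    rw [inner_sub_left]
    rw [mul_inv] at hxy hyx
    linarith
  exact (inv_mul_le_iff₀ hL).1 hsum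

end IsSmoothConvex

end SmoothConvex

section Sequences

theorem summable_of_le_sub_succ {a φ : ℕ → ℝ} (ha : ∀ k, 0 ≤ a k) (hφ : ∀ k, 0 ≤ φ k)
    (h : ∀ k, a k ≤ φ k - φ (k + 1)) : Summable a :=
  summable_of_sum_range_le (c := φ 0) ha fun n =>
    calc ∑ i ∈ Finset.range n, a i ≤ ∑ i ∈ Finset.range n, (φ i - φ (i + 1)) :=
          Finset.sum_le_sum fun i _ => h i
      _ = φ 0 - φ n := Finset.sum_range_sub' φ n
      _ ≤ φ 0 := sub_le_self _ (hφ n)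

theorem tendsto_succ_mul_of_antitone_of_summable {a : ℕ → ℝ} (ha : Antitone a)
    (hs : Summable a) : Tendsto (fun n : ℕ => ((n : ℝ) + 1) * a n) atTop (𝓝 0) := by
  have ha₀ : ∀ n, 0 ≤ a n := fun n => ha.le_of_tendsto hs.tendsto_atTop_zero n
  have htail : Tendsto (fun n : ℕ => 2 * ∑' i, a (i + n / 2)) atTop (𝓝 0) := by
    simpa using ((tendsto_sum_nat_add a).comp
      (Nat.tendsto_div_const_atTop two_ne_zero)).const_mul 2
  refine squeeze_zero (fun n => mul_nonneg (by positivity) (ha₀ n)) (fun n => ?_) htail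
  set m := n + 1 - n / 2
  have hblock : (m : ℝ) * a n ≤ ∑' i, a (i + n / 2) :=
    calc (m : ℝ) * a n = ∑ _i ∈ Finset.range m, a n := by simp
      _ ≤ ∑ i ∈ Finset.range m, a (i + n / 2) :=
        Finset.sum_le_sum fun i hi => ha (by have := Finset.mem_range.1 hi; omega)
      _ ≤ ∑' i, a (i + n / 2) :=
        ((summable_nat_add_iff (n / 2)).2 hs).sum_le_tsum _ fun i _ => ha₀ _
  have hhalf : (n : ℝ) + 1 ≤ 2 * m := by
    have : n + 1 ≤ 2 * m := by omega
    exact_mod_cast this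
  calc ((n : ℝ) + 1) * a n ≤ 2 * m * a n := by gcongr; exact ha₀ n
    _ ≤ 2 * ∑' i, a (i + n / 2) := by linarith

theorem tendsto_succ_mul_inf'_sub {a : ℕ → ℝ} {m : ℝ} (hm : ∀ k, m ≤ a (k + 1))
    (hs : Summable fun k => a (k + 1) - m) (hne : ∀ k : ℕ, (Finset.Icc 1 (k + 1)).Nonempty) :
    Tendsto (fun k : ℕ => ((k : ℝ) + 1) * ((Finset.Icc 1 (k + 1)).inf' (hne k) a - m))
      atTop (𝓝 0) := by
  refine tendsto_succ_mul_of_antitone_of_summable (fun k l hkl => ?_) ?_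
  · exact sub_le_sub_right (Finset.inf'_mono a (Finset.Icc_subset_Icc_right (by omega)) (hne k)) m
  · refine hs.of_nonneg_of_le (fun k => sub_nonneg.2 (Finset.le_inf' _ _ fun i hi => ?_))
      fun k => sub_le_sub_right (Finset.inf'_le a (by simp)) m
    obtain ⟨j, rfl⟩ := Nat.exists_eq_add_of_le' (Finset.mem_Icc.1 hi).1
    exact hm j

variable {ι E E' : Type*} [NormedAddCommGroup E] [NormedAddCommGroup E']

theorem memℓp_two_iff_summable_sq {f : ι → E} :
    Memℓp f 2 ↔ Summable fun i => ‖f i‖ ^ 2 := by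
  simpa using memℓp_gen_iff (p := 2) (by simp) (f := f)

theorem memℓp_clm_apply [NormedSpace ℝ E] [NormedSpace ℝ E'] (T : E →L[ℝ] E') {p : ENNReal}
    {f : ι → E} (hf : Memℓp f p) : Memℓp (fun i => T (f i)) p :=
  ((memℓp_norm_iff.2 hf).const_mul ‖T‖).mono fun i => T.le_opNorm (f i)

end Sequences

section PD3O

open scoped InnerProduct

variable {𝒳 𝒰 : Type*}
  [NormedAddCommGroup 𝒳] [InnerProductSpace ℝ 𝒳] [NormedAddCommGroup 𝒰] [InnerProductSpace ℝ 𝒰]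
  {K : 𝒳 →L[ℝ] 𝒰} {F R : 𝒳 → ℝ} {H : 𝒰 → ℝ} {F' : 𝒳 → 𝒳} {H' : 𝒰 → 𝒰}
  {L_F L γ η : ℝ}

/-- Half of the quadratic form of the block operator `[[1, -K†], [-K, η]]`. Evaluated at the
difference of an iterate `(q, u)` and its limit value it is the Lyapunov function of PD3O. -/
def pd3oEnergy (K : 𝒳 →L[ℝ] 𝒰) (η : ℝ) (q : 𝒳) (u : 𝒰) : ℝ :=
  (‖q‖ ^ 2 - 2 * ⟪K q, u⟫ + η * ‖u‖ ^ 2) / 2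

variable [CompleteSpace 𝒳] [CompleteSpace 𝒰]

theorem sq_norm_sub_adjoint_le_two_mul_pd3oEnergy (hη : ‖K‖ ^ 2 ≤ η) (q : 𝒳) (u : 𝒰) :
    ‖q - (K†) u‖ ^ 2 ≤ 2 * pd3oEnergy K η q u := by
  have hadj : ‖(K†) u‖ ^ 2 ≤ η * ‖u‖ ^ 2 :=
    calc ‖(K†) u‖ ^ 2 ≤ (‖K‖ * ‖u‖) ^ 2 := by
          gcongr
          simpa only [LinearIsometryEquiv.norm_map] using (K†).le_opNorm u
      _ = ‖K‖ ^ 2 * ‖u‖ ^ 2 := mul_pow _ _ _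
      _ ≤ η * ‖u‖ ^ 2 := by gcongr
  rw [norm_sub_sq_real, ContinuousLinearMap.adjoint_inner_right, pd3oEnergy]
  linarith

theorem pd3oEnergy_nonneg (hη : ‖K‖ ^ 2 ≤ η) (q : 𝒳) (u : 𝒰) : 0 ≤ pd3oEnergy K η q u := by
  linarith [sq_nonneg ‖q - (K†) u‖, sq_norm_sub_adjoint_le_two_mul_pd3oEnergy hη q u]

theorem pd3oEnergy_add_sub (q d : 𝒳) (u e : 𝒰) :
    pd3oEnergy K η (q + d) (u + e) - pd3oEnergy K η q u - pd3oEnergy K η d e =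
      ⟪q, d - (K†) e⟫ - ⟪u, K d⟫ + η * ⟪u, e⟫ := by
  simp only [pd3oEnergy, norm_add_sq_real, map_add, inner_add_left, inner_add_right,
    inner_sub_right, ContinuousLinearMap.adjoint_inner_right, real_inner_comm (K d) u]
  ring

/-- `(x, u)` is a primal-dual solution of `min F + R + H ∘ K`, where `F'` is the gradient of `F`. -/
structure IsPrimalDualSolution (K : 𝒳 →L[ℝ] 𝒰) (F' : 𝒳 → 𝒳) (R : 𝒳 → ℝ) (H : 𝒰 → ℝ)
    (x : 𝒳) (u : 𝒰) : Prop where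
  primal : IsSubgradientAt R x (-(F' x + (K†) u))
  dual : IsSubgradientAt H (K x) u

theorem IsPrimalDualSolution.objective_le {xstar : 𝒳} {ustar : 𝒰}
    (hsol : IsPrimalDualSolution K F' R H xstar ustar) (hF : IsSubgradientAt F xstar (F' xstar))
    (x : 𝒳) : F xstar + R xstar + H (K xstar) ≤ F x + R x + H (K x) := by
  have hFx := hF x
  have hRx := hsol.primal x
  have hHx := hsol.dual (K x)
  rw [inner_neg_left, inner_add_left, ContinuousLinearMap.adjoint_inner_left, map_sub] at hRx
  linarith

/-- One PD3O step `(q, u) ↦ (x, q', u')` with both proximal maps written as subgradient inclusions.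
The auxiliary point `p` is the primal prox point behind `u'` in Moreau's identity. -/
structure IsPD3OStep (K : 𝒳 →L[ℝ] 𝒰) (F' : 𝒳 → 𝒳) (R : 𝒳 → ℝ) (H : 𝒰 → ℝ) (γ η : ℝ)
    (q : 𝒳) (u : 𝒰) (x q' : 𝒳) (u' p : 𝒰) : Prop where
  subgradient_R : IsSubgradientAt R x (q - (K†) u - γ⁻¹ • x)
  q_eq : q' = γ⁻¹ • x - F' x
  subgradient_H : IsSubgradientAt H p u'
  p_eq : p = (γ * η) • (u - u') + K (x + γ • (q' - q))

/-- The monotonicity gap of a PD3O step: the sum of the monotonicity products `⟪a - a', z - z'⟫` of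
`∂R`, `F'` and `∂H` between the step and a solution `(xstar, ustar)`. The first two are merged by
means of `q - q' - K† u ∈ ∂R x + F' x`. -/
def pd3oGap (K : 𝒳 →L[ℝ] 𝒰) (xstar : 𝒳) (ustar : 𝒰) (q : 𝒳) (u : 𝒰) (x q' : 𝒳) (u' p : 𝒰) : ℝ :=
  ⟪q - q' - (K†) (u - ustar), x - xstar⟫ + ⟪u' - ustar, p - K xstar⟫

namespace IsPD3OStep

variable {q q' x xstar qstar : 𝒳} {u u' p ustar : 𝒰}

theorem of_isProxPt (hR : ConvexOn ℝ Set.univ R) (hH : ConvexOn ℝ Set.univ H)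
    (hγ : 0 < γ) (hη : 0 < η)
    (hx : IsProxPt γ R (γ • (q - (K†) u)) x) (hq : q' = γ⁻¹ • x - F' x)
    (hp : IsProxPt (γ * η) H ((γ * η) • (u + η⁻¹ • K (γ⁻¹ • x + q' - q))) p)
    (hu : u' = u + η⁻¹ • K (γ⁻¹ • x + q' - q) - (γ * η)⁻¹ • p) :
    IsPD3OStep K F' R H γ η q u x q' u' p where
  subgradient_R := by
    simpa only [smul_sub, inv_smul_smul₀ hγ.ne'] using hx.isSubgradientAt hR hγ
  q_eq := hq
  subgradient_H := by
    have hγη := mul_pos hγ hη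
    simpa only [hu, smul_sub, inv_smul_smul₀ hγη.ne'] using hp.isSubgradientAt hH hγη
  p_eq := by
    have hscale : x + γ • (q' - q) = γ • (γ⁻¹ • x + q' - q) := by
      rw [add_sub_assoc, smul_add, smul_inv_smul₀ hγ.ne']
    rw [hscale, hu, map_smul]
    match_scalars <;> field_simp <;> ring

theorem of_isProxPt_zero (hR : ConvexOn ℝ Set.univ R) (hγ : 0 < γ)
    (hx : IsProxPt γ R (γ • q) x) (hq : q' = γ⁻¹ • x - F' x) (hu : IsSubgradientAt H 0 u) :
    IsPD3OStep 0 F' R H γ η q u x q' u 0 where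
  subgradient_R := by
    simpa [smul_sub, inv_smul_smul₀ hγ.ne'] using hx.isSubgradientAt hR hγ
  q_eq := hq
  subgradient_H := hu
  p_eq := by simp

theorem gap_eq (h : IsPD3OStep K F' R H γ η q u x q' u' p) (hγ : γ ≠ 0)
    (hqstar : qstar = γ⁻¹ • xstar - F' xstar) (ustar : 𝒰) :
    pd3oGap K xstar ustar q u x q' u' p =
      γ * (pd3oEnergy K η (q - qstar) (u - ustar) - pd3oEnergy K η (q' - qstar) (u' - ustar)
        - pd3oEnergy K η (q - q') (u - u') + ⟪q - q' - (K†) (u - u'), F' x - F' xstar⟫) := by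
  have hx : x - xstar = γ • ((q' - qstar) + (F' x - F' xstar)) := by
    rw [h.q_eq, hqstar]
    match_scalars <;> field_simp <;> ring
  have hp : p - K xstar - K (x - xstar) = γ • (η • (u - u') - K (q - q')) := by
    rw [h.p_eq]
    simp only [map_add, map_sub, map_smul]
    module
  have hgap : pd3oGap K xstar ustar q u x q' u' p =
      ⟪q - q' - (K†) (u - u'), x - xstar⟫ + ⟪u' - ustar, p - K xstar - K (x - xstar)⟫ := by
    rw [pd3oGap, ← sub_add_sub_cancel u u' ustar, map_add, ← sub_sub, inner_sub_left,
      ContinuousLinearMap.adjoint_inner_left, inner_sub_right (u' - ustar) (p - K xstar)]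
    ring
  have hpolar := pd3oEnergy_add_sub (K := K) (η := η) (q' - qstar) (q - q') (u' - ustar) (u - u')
  rw [sub_add_sub_cancel', sub_add_sub_cancel'] at hpolar
  rw [hpolar, hgap, hp, hx, real_inner_smul_right, real_inner_smul_right, inner_add_right,
    inner_sub_right (u' - ustar), real_inner_smul_right, real_inner_comm (q' - qstar)]
  ring

theorem inner_add_inner_le_gap (h : IsPD3OStep K F' R H γ η q u x q' u' p)
    (hsol : IsPrimalDualSolution K F' R H xstar ustar) :
    ⟪F' x - F' xstar, x - xstar⟫ + ⟪u' - ustar, p - K xstar⟫ ≤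
      pd3oGap K xstar ustar q u x q' u' p := by
  have hR := h.subgradient_R.inner_sub_nonneg hsol.primal
  have hsplit : q - q' - (K†) (u - ustar) =
      (q - (K†) u - γ⁻¹ • x - -(F' xstar + (K†) ustar)) + (F' x - F' xstar) := by
    rw [h.q_eq, map_sub]
    abel
  rw [pd3oGap, hsplit, inner_add_left]
  linarith

theorem inner_gradient_le_gap (h : IsPD3OStep K F' R H γ η q u x q' u' p)
    (hsol : IsPrimalDualSolution K F' R H xstar ustar) :
    ⟪F' x - F' xstar, x - xstar⟫ ≤ pd3oGap K xstar ustar q u x q' u' p := by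
  linarith [h.inner_add_inner_le_gap hsol, h.subgradient_H.inner_sub_nonneg hsol.dual]

theorem inner_dual_le_gap (h : IsPD3OStep K F' R H γ η q u x q' u' p)
    (hsol : IsPrimalDualSolution K F' R H xstar ustar)
    (hF : IsSmoothConvex F F' L_F) :
    ⟪u' - ustar, p - K xstar⟫ ≤ pd3oGap K xstar ustar q u x q' u' p := by
  linarith [h.inner_add_inner_le_gap hsol,
    (hF.isSubgradientAt x).inner_sub_nonneg (hF.isSubgradientAt xstar)]

theorem gap_nonneg (h : IsPD3OStep K F' R H γ η q u x q' u' p)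
    (hsol : IsPrimalDualSolution K F' R H xstar ustar) (hF : IsSmoothConvex F F' L_F) :
    0 ≤ pd3oGap K xstar ustar q u x q' u' p :=
  (h.subgradient_H.inner_sub_nonneg hsol.dual).trans (h.inner_dual_le_gap hsol hF)

theorem energy_decrease (h : IsPD3OStep K F' R H γ η q u x q' u' p)
    (hsol : IsPrimalDualSolution K F' R H xstar ustar) (hF : IsSmoothConvex F F' L_F)
    (hLF : 0 < L_F) (hγ : 0 < γ) (hη : ‖K‖ ^ 2 ≤ η)
    (hqstar : qstar = γ⁻¹ • xstar - F' xstar) :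
    (2 - γ * L_F) / 4 *
        (pd3oGap K xstar ustar q u x q' u' p + γ / 2 * ‖q - q' - (K†) (u - u')‖ ^ 2) ≤
      γ * (pd3oEnergy K η (q - qstar) (u - ustar) -
        pd3oEnergy K η (q' - qstar) (u' - ustar)) := by
  have hgrad : ‖F' x - F' xstar‖ ^ 2 ≤ L_F * pd3oGap K xstar ustar q u x q' u' p :=
    (hF.sq_norm_sub_le hLF x xstar).trans
      (mul_le_mul_of_nonneg_left (h.inner_gradient_le_gap hsol) hLF.le)
  have hcross := mul_inner_le_of_sq_norm_le (d := q - q' - (K†) (u - u')) hγ hLF hgrad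
  have hdiff := mul_le_mul_of_nonneg_left
    (sq_norm_sub_adjoint_le_two_mul_pd3oEnergy hη (q - q') (u - u')) hγ.le
  linarith [h.gap_eq hγ.ne' hqstar ustar]

theorem sq_norm_dual_sub_le (h : IsPD3OStep K F' R H γ η q u x q' u' p)
    (hsol : IsPrimalDualSolution K F' R H xstar ustar) (hF : IsSmoothConvex F F' L_F)
    (hH : IsSmoothConvex H H' L) (hL : 0 < L) :
    ‖u' - ustar‖ ^ 2 ≤ L * pd3oGap K xstar ustar q u x q' u' p := by
  have hcoco := hH.sq_norm_sub_le hL p (K xstar)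
  rw [← h.subgradient_H.eq_of_hasGradientAt (hH.hasGradientAt p),
    ← hsol.dual.eq_of_hasGradientAt (hH.hasGradientAt (K xstar))] at hcoco
  exact hcoco.trans (mul_le_mul_of_nonneg_left (h.inner_dual_le_gap hsol hF) hL.le)

theorem residual_eq (h : IsPD3OStep K F' R H γ η q u x q' u' p) :
    K x - p = γ • (K ∘L K† - η • .id ℝ 𝒰) (u - u') + γ • K (q - q' - (K†) (u - u')) := by
  rw [h.p_eq]
  simp only [map_add, map_sub, map_smul, sub_apply, smul_apply,
    ContinuousLinearMap.comp_apply, ContinuousLinearMap.id_apply]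
  module

theorem objective_sub_le (h : IsPD3OStep K F' R H γ η q u x q' u' p)
    (hF : IsSubgradientAt F x (F' x)) (hH : IsSmoothConvex H H' L) (xstar : 𝒳) (ustar : 𝒰) :
    F x + R x + H (K x) - (F xstar + R xstar + H (K xstar)) ≤
      pd3oGap K xstar ustar q u x q' u' p + ⟪u' - ustar, K x - p⟫ + L / 2 * ‖K x - p‖ ^ 2 := by
  have hFR : F x + R x - (F xstar + R xstar) ≤ ⟪q - q' - (K†) u, x - xstar⟫ := by
    have hFx := hF xstar
    have hRx := h.subgradient_R xstar
    have hsplit : q - q' - (K†) u = (q - (K†) u - γ⁻¹ • x) + F' x := by rw [h.q_eq]; abel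
    rw [← neg_sub x, inner_neg_right] at hFx hRx
    rw [hsplit, inner_add_left]
    linarith
  have hHK : H (K x) - H (K xstar) ≤ ⟪u', K x - K xstar⟫ + L / 2 * ‖K x - p‖ ^ 2 := by
    rw [h.subgradient_H.eq_of_hasGradientAt (hH.hasGradientAt p)]
    linarith [hH.le_add_inner_add_sq (K xstar) (K x) p]
  have hgap : ⟪q - q' - (K†) u, x - xstar⟫ + ⟪u', K x - K xstar⟫ =
      pd3oGap K xstar ustar q u x q' u' p + ⟪u' - ustar, K x - p⟫ := by
    rw [pd3oGap, add_assoc, ← inner_add_right, add_comm (p - _), sub_add_sub_cancel, map_sub,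
      ← sub_add, inner_add_left _ ((K†) ustar), ContinuousLinearMap.adjoint_inner_left, map_sub,
      inner_sub_left u' ustar]
    ring
  linarith

end IsPD3OStep

variable {x q : ℕ → 𝒳} {u p : ℕ → 𝒰} {xstar : 𝒳} {ustar : 𝒰}

theorem summable_pd3oGap_add_sq_norm
    (hstep : ∀ k, IsPD3OStep K F' R H γ η (q k) (u k) (x (k + 1)) (q (k + 1)) (u (k + 1)) (p k))
    (hsol : IsPrimalDualSolution K F' R H xstar ustar) (hF : IsSmoothConvex F F' L_F)
    (hLF : 0 < L_F) (hγ : 0 < γ) (hγ₂ : γ * L_F < 2) (hη : ‖K‖ ^ 2 ≤ η) :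
    Summable fun k =>
      pd3oGap K xstar ustar (q k) (u k) (x (k + 1)) (q (k + 1)) (u (k + 1)) (p k) +
        γ / 2 * ‖q k - q (k + 1) - (K†) (u k - u (k + 1))‖ ^ 2 := by
  set qstar := γ⁻¹ • xstar - F' xstar with hqstar
  have hrate : 0 < (2 - γ * L_F) / 4 := by linarith
  rw [← summable_mul_left_iff hrate.ne']
  refine summable_of_le_sub_succ
    (φ := fun k => γ * pd3oEnergy K η (q k - qstar) (u k - ustar)) (fun k => ?_)
    (fun k => mul_nonneg hγ.le (pd3oEnergy_nonneg hη _ _)) (fun k => ?_)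
  · have := (hstep k).gap_nonneg hsol hF
    positivity
  · rw [← mul_sub]
    exact (hstep k).energy_decrease hsol hF hLF hγ hη hqstar

theorem summable_objective_sub
    (hstep : ∀ k, IsPD3OStep K F' R H γ η (q k) (u k) (x (k + 1)) (q (k + 1)) (u (k + 1)) (p k))
    (hsol : IsPrimalDualSolution K F' R H xstar ustar)
    (hF : IsSmoothConvex F F' L_F) (hLF : 0 < L_F) (hH : IsSmoothConvex H H' L) (hL : 0 < L)
    (hγ : 0 < γ) (hγ₂ : γ * L_F < 2) (hη : ‖K‖ ^ 2 ≤ η) :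
    Summable fun k => F (x (k + 1)) + R (x (k + 1)) + H (K (x (k + 1))) -
      (F xstar + R xstar + H (K xstar)) := by
  have hsum := summable_pd3oGap_add_sq_norm hstep hsol hF hLF hγ hγ₂ hη
  have hgap₀ k := (hstep k).gap_nonneg hsol hF
  have hgap := hsum.of_nonneg_of_le hgap₀ fun k => le_add_of_nonneg_right (by positivity)
  have hmove : Memℓp (fun k => q k - q (k + 1) - (K†) (u k - u (k + 1))) 2 := by
    rw [memℓp_two_iff_summable_sq, ← summable_mul_left_iff (half_pos hγ).ne']
    exact hsum.of_nonneg_of_le (fun k => by positivity) fun k => le_add_of_nonneg_left (hgap₀ k)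
  have hdual : Memℓp (fun k => u (k + 1) - ustar) 2 := memℓp_two_iff_summable_sq.2 <|
    (hgap.mul_left L).of_nonneg_of_le (fun k => sq_nonneg _)
      fun k => (hstep k).sq_norm_dual_sub_le hsol hF hH hL
  have hdual₀ : Memℓp (fun k => u k - ustar) 2 := memℓp_two_iff_summable_sq.2 <|
    (summable_nat_add_iff (f := fun k => ‖u k - ustar‖ ^ 2) 1).1
      (memℓp_two_iff_summable_sq.1 hdual)
  have hdualmove : Memℓp (fun k => u k - u (k + 1)) 2 := by
    simpa [Pi.sub_def] using hdual₀.sub hdual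
  have hres : Memℓp (fun k => K (x (k + 1)) - p k) 2 := by
    simp_rw [fun k => (hstep k).residual_eq]
    exact ((memℓp_clm_apply _ hdualmove).const_smul γ).add ((memℓp_clm_apply K hmove).const_smul γ)
  refine ((hgap.add (lp.summable_inner ⟨_, hdual⟩ ⟨_, hres⟩)).add
    ((memℓp_two_iff_summable_sq.1 hres).mul_left (L / 2))).of_nonneg_of_le
    (fun k => sub_nonneg.2 (hsol.objective_le (hF.isSubgradientAt xstar) _))
    fun k => (hstep k).objective_sub_le (hF.isSubgradientAt _) hH xstar ustar

theorem exists_isPD3OStep_of_isProxPt (hR : ConvexOn ℝ Set.univ R) (hH : ConvexOn ℝ Set.univ H)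
    (hsol : IsPrimalDualSolution K F' R H xstar ustar) (hγ : 0 < γ) (hη : ‖K‖ ^ 2 ≤ η)
    (hx : ∀ k, IsProxPt γ R (γ • (q k - (K†) (u k))) (x (k + 1)))
    (hq : ∀ k, q (k + 1) = (1 / γ) • x (k + 1) - F' (x (k + 1)))
    (hu : ∀ k, ∃ p, IsProxPt (γ * η) H
        ((γ * η) • (u k + (1 / η) • K ((1 / γ) • x (k + 1) + q (k + 1) - q k))) p ∧
      u (k + 1) = (u k + (1 / η) • K ((1 / γ) • x (k + 1) + q (k + 1) - q k))
        - (1 / (γ * η)) • p) :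
    ∃ v p : ℕ → 𝒰, ∀ k,
      IsPD3OStep K F' R H γ η (q k) (v k) (x (k + 1)) (q (k + 1)) (v (k + 1)) (p k) := by
  simp only [one_div] at hq hu
  rcases ((sq_nonneg ‖K‖).trans hη).eq_or_lt with rfl | hη₀
  · -- `1 / η = 0` freezes `u`, but then `K = 0` and `x`, `q` do not depend on the dual iterates.
    obtain rfl : K = 0 := by simpa using hη.antisymm (sq_nonneg _)
    have hdual : IsSubgradientAt H 0 ustar := by simpa using hsol.dual
    exact ⟨fun _ => ustar, fun _ => 0, fun k =>
      .of_isProxPt_zero hR hγ (by simpa using hx k) (hq k) hdual⟩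
  · choose p hp hu using hu
    exact ⟨u, p, fun k => .of_isProxPt hR hH hγ hη₀ (hx k) (hq k) (hp k) (hu k)⟩

theorem pd3o_best_iterate_rate_general (hF : IsSmoothConvex F F' L_F) (hLF : 0 < L_F)
    (hR : ConvexOn ℝ Set.univ R) (hH : IsSmoothConvex H H' L) (hL : 0 < L)
    (hsol : IsPrimalDualSolution K F' R H xstar ustar)
    (hγ₀ : 0 < γ) (hγ₂ : γ < 2 / L_F) (hη : ‖K‖ ^ 2 ≤ η)
    (hx : ∀ k, IsProxPt γ R (γ • (q k - (K†) (u k))) (x (k + 1)))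
    (hq : ∀ k, q (k + 1) = (1 / γ) • x (k + 1) - F' (x (k + 1)))
    (hu : ∀ k, ∃ p, IsProxPt (γ * η) H
        ((γ * η) • (u k + (1 / η) • K ((1 / γ) • x (k + 1) + q (k + 1) - q k))) p ∧
      u (k + 1) = (u k + (1 / η) • K ((1 / γ) • x (k + 1) + q (k + 1) - q k))
        - (1 / (γ * η)) • p) :
    Tendsto (fun k : ℕ => ((k : ℝ) + 1) *
      ((Finset.Icc 1 (k + 1)).inf' (Finset.nonempty_Icc.mpr (Nat.le_add_left 1 k))
          (fun i => F (x i) + R (x i) + H (K (x i)))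
        - (F xstar + R xstar + H (K xstar))))
      atTop (𝓝 0) := by
  obtain ⟨v, p, hstep⟩ := exists_isPD3OStep_of_isProxPt hR hH.convexOn hsol hγ₀ hη hx hq hu
  exact tendsto_succ_mul_inf'_sub
    (a := fun i => F (x i) + R (x i) + H (K (x i)))
    (fun k => hsol.objective_le (hF.isSubgradientAt xstar) (x (k + 1)))
    (summable_objective_sub hstep hsol hF hLF hH hL hγ₀ ((lt_div_iff₀ hLF).1 hγ₂) hη) _

end PD3O

/-- Theorem 1(iii): `o(1/k)` best-iterate rate of the PD3O algorithm when `H` is smooth. -/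
theorem pd3o_best_iterate_rate
    {𝒳 𝒰 : Type*}
    [NormedAddCommGroup 𝒳] [InnerProductSpace ℝ 𝒳] [FiniteDimensional ℝ 𝒳]
    [NormedAddCommGroup 𝒰] [InnerProductSpace ℝ 𝒰] [FiniteDimensional ℝ 𝒰]
    (K : 𝒳 →L[ℝ] 𝒰)
    (F R : 𝒳 → ℝ) (H : 𝒰 → ℝ) (F' : 𝒳 → 𝒳) (L_F : ℝ)
    (hLF : 0 < L_F)
    (hFconv : ConvexOn ℝ Set.univ F)
    (hRconv : ConvexOn ℝ Set.univ R)
    (hHconv : ConvexOn ℝ Set.univ H)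
    (hFgrad : ∀ z, HasGradientAt F (F' z) z)
    (hFlip : ∀ z z', ‖F' z - F' z'‖ ≤ L_F * ‖z - z'‖)
    -- H is L-smooth
    (H' : 𝒰 → 𝒰) (L : ℝ) (hL : 0 < L)
    (hHgrad : ∀ v, HasGradientAt H (H' v) v)
    (hHlip : ∀ v v', ‖H' v - H' v'‖ ≤ L * ‖v - v'‖)
    -- Assumption 1: existence of a primal-dual solution
    (xstar : 𝒳) (rstar : 𝒳) (hstar : 𝒰)
    (hrstar : IsSubgradientAt R xstar rstar)
    (hhstar : IsSubgradientAt H (K xstar) hstar)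
    (hopt : F' xstar + rstar + (ContinuousLinearMap.adjoint K) hstar = 0)
    -- parameters
    (γ η : ℝ) (hγ0 : 0 < γ) (hγ2 : γ < 2 / L_F) (hη : ‖K‖ ^ 2 ≤ η)
    -- PD3O iterates
    (x q : ℕ → 𝒳) (u : ℕ → 𝒰)
    (hx : ∀ k, IsProxPt γ R
      (γ • (q k - (ContinuousLinearMap.adjoint K) (u k))) (x (k+1)))
    (hq : ∀ k, q (k+1) = (1/γ) • x (k+1) - F' (x (k+1)))
    (hu : ∀ k, ∃ p, IsProxPt (γ*η) H
        ((γ*η) • (u k + (1/η) • K ((1/γ) • x (k+1) + q (k+1) - q k))) p ∧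
      u (k+1) = (u k + (1/η) • K ((1/γ) • x (k+1) + q (k+1) - q k))
        - (1/(γ*η)) • p) :
    Tendsto (fun k : ℕ => ((k : ℝ) + 1) *
      ((Finset.Icc 1 (k+1)).inf' (Finset.nonempty_Icc.mpr (by omega))
          (fun i => F (x i) + R (x i) + H (K (x i)))
        - (F xstar + R xstar + H (K xstar))))
      atTop (𝓝 0) := by
  have hr : rstar = -(F' xstar + (ContinuousLinearMap.adjoint K) hstar) :=
    eq_neg_of_add_eq_zero_right (by rw [← hopt]; abel)
  exact pd3o_best_iterate_rate_general ⟨hFconv, hFgrad, hFlip⟩ hLF hRconv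
    ⟨hHconv, hHgrad, hHlip⟩ hL ⟨hr ▸ hrstar, hhstar⟩ hγ0 hγ2 hη hx hq hu
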